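/- arXiv:1302.6872 — 2 statements merged into one kernel-verified Lean document; each statement's English description precedes it below -/
import Mathlib

section
/- Let d ≥ 2, let ε > 0 satisfy p := p_c(d) + ε < 1, and let ℓ, L, M ≥ 1 be integers and x ∈ ℤ^d. Then ℙ_p( complement of ℬ(x,ℓ,L,M) ) ≤ (1 − p)^{−2dM} · ((6L+1)^d + 1)^M · ℙ_p( complement of ℰ(x,ℓ,L) ). -/
open MeasureTheory Set

namespace Perc

/-- Vertices of the lattice `ℤ^d`. -/
abbrev V (d : ℕ) : Type := Fin d → ℤ

/-- Nearest-neighbour adjacency in `ℤ^d`: `‖x - y‖₁ = 1`. -/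
def Adjacent {d : ℕ} (x y : V d) : Prop := (∑ i, |x i - y i|) = 1

/-- `e` is an edge of the nearest-neighbour lattice `ℤ^d`. -/
def IsEdge {d : ℕ} (e : Sym2 (V d)) : Prop := ∃ x y : V d, Adjacent x y ∧ e = s(x, y)

/-- The edge set `E(ℤ^d)` of the nearest-neighbour lattice. -/
abbrev Edge (d : ℕ) : Type := {e : Sym2 (V d) // IsEdge e}

/-- A bond percolation configuration: each edge is open (`true`) or closed (`false`). -/
abbrev Config (d : ℕ) : Type := Edge d → Bool

/-- `x` and `y` are joined by an open edge of `ω`. -/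
def OpenAdj {d : ℕ} (ω : Config d) (x y : V d) : Prop :=
  ∃ h : IsEdge s(x, y), ω ⟨s(x, y), h⟩ = true

/-- `x` and `y` lie in the same open cluster of `ω`. -/
def Connected {d : ℕ} (ω : Config d) (x y : V d) : Prop :=
  Relation.ReflTransGen (OpenAdj ω) x y

/-- The open cluster of `ω` containing `x`. -/
def cluster {d : ℕ} (ω : Config d) (x : V d) : Set (V d) := {y | Connected ω x y}

/-- `x` lies in an infinite open cluster of `ω`. -/
def InInfinite {d : ℕ} (ω : Config d) (x : V d) : Prop := (cluster ω x).Infinite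

/-- `𝒞∞(ω)`: the set of vertices lying in infinite open clusters. -/
def Cinf {d : ℕ} (ω : Config d) : Set (V d) := {x | InInfinite ω x}

/-- `ω` has an infinite open cluster. -/
def HasInfCluster {d : ℕ} (ω : Config d) : Prop := ∃ x : V d, InInfinite ω x

/-- The Bernoulli(p) weight of a single edge state (`true ↦ p`, `false ↦ 1 - p`). -/
noncomputable def bernoulliCyl (p : ℝ) (b : Bool) : ENNReal :=
  if b then ENNReal.ofReal p else ENNReal.ofReal (1 - p)

/-- `μ` is the product Bernoulli(`p`) measure on configurations: it is a probability
measure whose finite-dimensional cylinder probabilities are the i.i.d. Bernoulli ones. -/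
def IsBernoulli (d : ℕ) (p : ℝ) (μ : Measure (Config d)) : Prop :=
  IsProbabilityMeasure μ ∧
    ∀ (t : Finset (Edge d)) (f : Edge d → Bool),
      μ {ω | ∀ e ∈ t, ω e = f e} = ∏ e ∈ t, bernoulliCyl p (f e)

/-- The critical probability `p_c` associated with a family `P p` of Bernoulli(`p`)
percolation measures. -/
noncomputable def pcOf (d : ℕ) (P : ℝ → Measure (Config d)) : ℝ :=
  sInf {p | p ∈ Icc (0 : ℝ) 1 ∧ 0 < P p {ω | HasInfCluster ω}}

/-- The monotone coupling randomness: `U` is the law of i.i.d. uniform-`[0,1]` labels on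
the edges (characterized by its finite-dimensional distribution functions). -/
def IsUniform (d : ℕ) (U : Measure (Edge d → ℝ)) : Prop :=
  IsProbabilityMeasure U ∧
    ∀ (t : Finset (Edge d)) (a : Edge d → ℝ),
      U {u | ∀ e ∈ t, u e ≤ a e} = ∏ e ∈ t, ENNReal.ofReal (min (max (a e) 0) 1)

/-- The configuration `ω_p` obtained from uniform labels `u` in the monotone coupling. -/
noncomputable def level {d : ℕ} (p : ℝ) (u : Edge d → ℝ) : Config d :=
  fun e => decide (u e ≤ p)

open Classical in
/-- `ω^S`: the configuration obtained from `ω` by closing every edge with an endpoint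
in `S`. -/
noncomputable def closeOn {d : ℕ} (S : Set (V d)) (ω : Config d) : Config d :=
  fun e => if ∃ x ∈ e.val, x ∈ S then false else ω e

/-- `ω̃_p` built from `ω_p`: keep an edge open iff it is open and its cluster is finite. -/
noncomputable def burn {d : ℕ} (ω : Config d) : Config d := closeOn (Cinf ω) ω

open Classical in
/-- The restriction of `ω` to edges with both endpoints in `R` (other edges closed). -/
noncomputable def restrictTo {d : ℕ} (R : Set (V d)) (ω : Config d) : Config d :=
  fun e => if ∀ x ∈ e.val, x ∈ R then ω e else false

/-- The box `B_x(L) = {y : ‖y - x‖_∞ ≤ L}`. -/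
def box {d : ℕ} (x : V d) (L : ℕ) : Set (V d) := {y | ∀ i, |y i - x i| ≤ (L : ℤ)}

/-- The sphere `∂B_x(L) = {y : ‖y - x‖_∞ = L}`. -/
def sphere {d : ℕ} (x : V d) (L : ℕ) : Set (V d) :=
  {y | (∀ i, |y i - x i| ≤ (L : ℤ)) ∧ ∃ i, |y i - x i| = (L : ℤ)}

/-- The slab `S_ℓ = {x : |x_i| ≤ ℓ for all coordinates i ≥ 3}` (`0`-indexed: `i ≥ 2`). -/
def slab (d : ℕ) (ℓ : ℕ) : Set (V d) := {x | ∀ i : Fin d, 2 ≤ (i : ℕ) → |x i| ≤ (ℓ : ℤ)}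

/-- `x` is connected by an open path to some vertex of `S`. -/
def ConnectedToSet {d : ℕ} (ω : Config d) (x : V d) (S : Set (V d)) : Prop :=
  ∃ y ∈ S, Connected ω x y

/-- The set of vertices `y ∈ S_ℓ ∩ B_x(3L)` with `y ↔ ∂B_y(L)`. -/
def armSet {d : ℕ} (ω : Config d) (x : V d) (ℓ L : ℕ) : Set (V d) :=
  {y | y ∈ slab d ℓ ∩ box x (3 * L) ∧ ConnectedToSet ω y (sphere y L)}

/-- The event `𝒜(x,ℓ,L,M)`: strictly fewer than `M` vertices `y ∈ S_ℓ ∩ B_x(3L)`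
are connected to `∂B_y(L)`. -/
def eventA {d : ℕ} (x : V d) (ℓ L M : ℕ) : Set (Config d) :=
  {ω | (armSet ω x ℓ L).Finite ∧ (armSet ω x ℓ L).ncard < M}

/-- The set `C` has `ℓ∞`-diameter strictly larger than `L`. -/
def DiamGT {d : ℕ} (C : Set (V d)) (L : ℕ) : Prop :=
  ∃ a ∈ C, ∃ b ∈ C, ∃ i, (L : ℤ) < |a i - b i|

/-- The event `ℰ(x,ℓ,L)`: in the restriction of `ω` to `S_ℓ ∩ B_x(3L)` there is an open
crossing from `∂B_x(L)` to `∂B_x(3L)`, and there is exactly one open cluster of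
`ℓ∞`-diameter larger than `L`. -/
def eventE {d : ℕ} (x : V d) (ℓ L : ℕ) : Set (Config d) :=
  {ω |
    (∃ a ∈ sphere x L, ∃ b ∈ sphere x (3 * L),
        Connected (restrictTo (slab d ℓ ∩ box x (3 * L)) ω) a b) ∧
      ∃! C : Set (V d),
        (∃ y : V d, C = cluster (restrictTo (slab d ℓ ∩ box x (3 * L)) ω) y) ∧ DiamGT C L}

/-- The event `ℬ(x,ℓ,L,M)`: `ω^S ∈ ℰ(x,ℓ,L)` for every `S ⊆ B_x(3L)` with `|S| ≤ M`. -/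
def eventB {d : ℕ} (x : V d) (ℓ L M : ℕ) : Set (Config d) :=
  {ω | ∀ S : Set (V d), S ⊆ box x (3 * L) → S.Finite → S.ncard ≤ M →
    closeOn S ω ∈ eventE x ℓ L}

/-- The embedding of `ℤ²` into `ℤ^d` (last `d - 2` coordinates zero). -/
def emb (d : ℕ) (u : ℤ × ℤ) : V d :=
  fun i => if (i : ℕ) = 0 then u.1 else if (i : ℕ) = 1 then u.2 else 0

/-- Nearest-neighbour adjacency in `ℤ²`. -/
def Adjacent₂ (u v : ℤ × ℤ) : Prop := |u.1 - v.1| + |u.2 - v.2| = 1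

/-- `A ⊆ ℤ²` is nearest-neighbour-connected. -/
def ConnSet₂ (A : Set (ℤ × ℤ)) : Prop :=
  ∀ a ∈ A, ∀ b ∈ A,
    Relation.ReflTransGen (fun u v => u ∈ A ∧ v ∈ A ∧ Adjacent₂ u v) a b


/-!
If all edges touching a finite set `S` are closed in `ω`, then `ω^S = ω`. Since `ω^S` does not
depend on the states of these at most `2d|S|` edges, a measurable event `A` satisfies
`(1 - p)^{2d|S|} ℙ_p(ω^S ∈ A) ≤ ℙ_p(ω^S ∈ A, all edges touching S are closed) ≤ ℙ_p(A)`.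
Apply this to `A = ℰᶜ`, which is determined by finitely many edges, and sum over the sets `S`;
their number is at most `∑_{k ≤ M} C(n, k) ≤ ∑_{k ≤ M} C(M, k) n^k = (n + 1)^M`, where
`n = |B_x(3L)|`.
-/

lemma card_powerset_filter_card_le_le {α : Type*} (B : Finset α) (M : ℕ) :
    {S ∈ B.powerset | S.card ≤ M}.card ≤ (B.card + 1) ^ M := by
  classical
  have hslices : {S ∈ B.powerset | S.card ≤ M} ⊆
      (Finset.range (M + 1)).biUnion fun k => B.powersetCard k := fun S hS => by
    obtain ⟨hSB, hSM⟩ := Finset.mem_filter.mp hS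
    exact Finset.mem_biUnion.mpr ⟨S.card, Finset.mem_range_succ_iff.mpr hSM,
      Finset.mem_powersetCard.mpr ⟨Finset.mem_powerset.mp hSB, rfl⟩⟩
  calc {S ∈ B.powerset | S.card ≤ M}.card
      ≤ ∑ k ∈ Finset.range (M + 1), B.card.choose k := by
        simpa only [Finset.card_powersetCard] using
          (Finset.card_le_card hslices).trans Finset.card_biUnion_le
    _ ≤ ∑ k ∈ Finset.range (M + 1), B.card ^ k * M.choose k :=
        Finset.sum_le_sum fun k hk => (Nat.choose_le_pow _ _).trans <|
          Nat.le_mul_of_pos_right _ <| Nat.choose_pos <| Finset.mem_range_succ_iff.mp hk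
    _ = (B.card + 1) ^ M := by simp only [add_pow, one_pow, mul_one, Nat.cast_id]

lemma measurableSet_of_dependsOn {ι : Type*} {α : ι → Type*} [∀ i, Finite (α i)]
    [∀ i, MeasurableSpace (α i)] [∀ i, MeasurableSingletonClass (α i)] {G : Set ι}
    (hG : G.Finite) {A : Set (∀ i, α i)} (hA : DependsOn (· ∈ A) G) : MeasurableSet A := by
  have := hG.to_subtype
  have hcylinder : A = G.domRestrict ⁻¹' (G.domRestrict '' A) := by
    refine (subset_preimage_image _ _).antisymm ?_
    rintro ω ⟨ω', hω', heq⟩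
    exact (hA fun i hi => congrFun heq ⟨i, hi⟩).mp hω'
  rw [hcylinder]
  exact (toFinite _).measurableSet.preimage (measurable_pi_lambda _ fun i => measurable_pi_apply _)

section

variable {d : ℕ}

/-! ### Boxes and edges -/

lemma box_eq_Icc (x : V d) (n : ℕ) :
    box x n = Icc (fun i => x i - n) (fun i => x i + n) := by
  ext y
  simp only [box, mem_ofPred_eq, mem_Icc, Pi.le_def, ← forall_and, abs_sub_le_iff]
  exact forall_congr' fun i => by omega

/-- The box `B_x(n)` as a `Finset`, so that it can be counted. -/
noncomputable def boxFinset (x : V d) (n : ℕ) : Finset (V d) :=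
  Finset.Icc (fun i => x i - n) (fun i => x i + n)

lemma coe_boxFinset (x : V d) (n : ℕ) : (boxFinset x n : Set (V d)) = box x n := by
  rw [boxFinset, Finset.coe_Icc, box_eq_Icc]

lemma card_boxFinset (x : V d) (n : ℕ) : (boxFinset x n).card = (2 * n + 1) ^ d := by
  have hside (i : Fin d) : (Finset.Icc (x i - n) (x i + n)).card = 2 * n + 1 := by
    rw [Int.card_Icc]
    omega
  simp only [boxFinset, Pi.card_Icc, hside, Finset.prod_const, Finset.card_univ, Fintype.card_fin]

lemma Adjacent.symm {x y : V d} (h : Adjacent x y) : Adjacent y x := by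
  simpa only [Adjacent, abs_sub_comm] using h

lemma Adjacent.exists_eq_add_single {x y : V d} (h : Adjacent x y) :
    ∃ (i : Fin d) (u : ℤˣ), y = x + Pi.single i (u : ℤ) := by
  obtain ⟨i, hi⟩ : ∃ i, x i ≠ y i := by
    by_contra! hxy
    simp [Adjacent, hxy] at h
  have hi_pos : 0 < |x i - y i| := abs_pos.mpr (sub_ne_zero.mpr hi)
  have hrest_nonneg : ∀ j ∈ Finset.univ.erase i, 0 ≤ |x j - y j| := fun j _ => abs_nonneg _
  have hsum : |x i - y i| + ∑ j ∈ Finset.univ.erase i, |x j - y j| = 1 := by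
    rw [Finset.add_sum_erase _ (fun j => |x j - y j|) (Finset.mem_univ i)]
    exact h
  have hrest : ∑ j ∈ Finset.univ.erase i, |x j - y j| = 0 := by
    have := Finset.sum_nonneg hrest_nonneg
    omega
  obtain ⟨u, hu⟩ : IsUnit (y i - x i) := by
    rw [Int.isUnit_iff_abs_eq, abs_sub_comm]
    omega
  refine ⟨i, u, funext fun j => ?_⟩
  obtain rfl | hj := eq_or_ne j i
  · simp [hu]
  · have hxy := (Finset.sum_eq_zero_iff_of_nonneg hrest_nonneg).mp hrest j (by simp [hj])
    simp [hj, eq_of_sub_eq_zero (abs_eq_zero.mp hxy)]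

open Classical in
/-- The edges with an endpoint in `S`, that is, those closed in `ω^S`. They are enumerated by an
endpoint in `S`, a coordinate direction and a sign, which makes the bound on their number
immediate. -/
noncomputable def edgesTouching (S : Finset (V d)) : Finset (Edge d) :=
  (S.biUnion fun y => Finset.univ.image fun q : Fin d × ℤˣ =>
    s(y, y + Pi.single q.1 (q.2 : ℤ))).subtype IsEdge

lemma mem_edgesTouching {S : Finset (V d)} {e : Edge d} :
    e ∈ edgesTouching S ↔ ∃ y ∈ e.val, y ∈ S := by
  simp only [edgesTouching, Finset.mem_subtype, Finset.mem_biUnion, Finset.mem_image,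
    Finset.mem_univ, true_and]
  constructor
  · rintro ⟨y, hy, q, hq⟩
    exact ⟨y, hq ▸ Sym2.mem_mk_left _ _, hy⟩
  · rintro ⟨y, hye, hyS⟩
    obtain ⟨z, hz, hyz⟩ : ∃ z, e.val = s(y, z) ∧ Adjacent y z := by
      obtain ⟨a, b, hab, he⟩ := e.property
      rw [he, Sym2.mem_iff] at hye
      rcases hye with rfl | rfl
      exacts [⟨b, he, hab⟩, ⟨a, he.trans Sym2.eq_swap, hab.symm⟩]
    obtain ⟨i, u, rfl⟩ := hyz.exists_eq_add_single
    exact ⟨y, hyS, (i, u), hz.symm⟩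

lemma card_edgesTouching_le (S : Finset (V d)) : (edgesTouching S).card ≤ 2 * d * S.card := by
  classical
  rw [edgesTouching, Finset.card_subtype, mul_comm]
  refine (Finset.card_filter_le _ _).trans <|
    Finset.card_biUnion_le_card_mul _ _ _ fun y _ => Finset.card_image_le.trans_eq ?_
  rw [Finset.card_univ, Fintype.card_prod, Fintype.card_fin, Fintype.card_units_int, mul_comm]

/-! ### The cost of closing edges -/

open ProbabilityTheory

variable {p : ℝ} {μ : Measure (Config d)}

lemma IsBernoulli.measure_eval (h : IsBernoulli d p μ) (e : Edge d) (b : Bool) :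
    μ {ω | ω e = b} = bernoulliCyl p b := by
  simpa using h.2 {e} fun _ => b

lemma IsBernoulli.iIndepFun_eval (h : IsBernoulli d p μ) :
    iIndepFun (fun (e : Edge d) (ω : Config d) => ω e) μ := by
  have := h.1
  refine iIndepFun_iff_finset.mpr fun t => ?_
  have hmeas (e : t) : Measurable (t.restrict (fun (e : Edge d) (ω : Config d) => ω e) e) :=
    measurable_pi_apply _
  rw [iIndepFun_iff_map_fun_eq_pi_map fun e => (hmeas e).aemeasurable]
  have (e : t) := Measure.isProbabilityMeasure_map (μ := μ) (hmeas e).aemeasurable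
  refine Measure.ext_of_singleton fun f => ?_
  have hcyl : (fun (ω : Config d) (e : t) => ω e) ⁻¹' {f} =
      {ω | ∀ e ∈ t, ω e = if he : e ∈ t then f ⟨e, he⟩ else false} := by
    ext ω
    simp +contextual [funext_iff]
  have hmarginal (e : t) : μ.map (fun ω : Config d => ω e) {f e} = bernoulliCyl p (f e) := by
    rw [Measure.map_apply (measurable_pi_apply _) (measurableSet_singleton _)]
    exact h.measure_eval e (f e)
  rw [Measure.pi_singleton, Measure.map_apply (by fun_prop) (measurableSet_singleton f)]
  simp only [Finset.restrict_def]
  rw [hcyl, h.2, ← Finset.prod_coe_sort]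
  simp [hmarginal]

/-- The σ-algebra generated by the states of the edges in `T`. -/
abbrev edgeSigmaAlgebra (T : Set (Edge d)) : MeasurableSpace (Config d) :=
  ⨆ e ∈ T, MeasurableSpace.comap (fun ω : Config d => ω e) inferInstance

lemma measurable_eval_edgeSigmaAlgebra {T : Set (Edge d)} {e : Edge d} (he : e ∈ T) :
    Measurable[edgeSigmaAlgebra T] fun ω : Config d => ω e :=
  (comap_measurable _).mono (le_iSup₂_of_le e he le_rfl) le_rfl

lemma IsBernoulli.indep_edgeSigmaAlgebra (h : IsBernoulli d p μ) {T T' : Set (Edge d)}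
    (hTT' : Disjoint T T') : Indep (edgeSigmaAlgebra T) (edgeSigmaAlgebra T') μ :=
  indep_iSup_of_disjoint (fun e => (measurable_pi_apply e).comap_le)
    ((iIndepFun_iff_iIndep _ _ _).mp h.iIndepFun_eval) hTT'

lemma measurableSet_forall_closed (T : Finset (Edge d)) :
    MeasurableSet[edgeSigmaAlgebra T] {ω : Config d | ∀ e ∈ T, ω e = false} := by
  simp only [ofPred_forall]
  exact Finset.measurableSet_biInter _ fun e he =>
    measurable_eval_edgeSigmaAlgebra he (measurableSet_singleton false)

lemma IsBernoulli.measure_forall_closed (h : IsBernoulli d p μ) (T : Finset (Edge d)) :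
    μ {ω | ∀ e ∈ T, ω e = false} = ENNReal.ofReal (1 - p) ^ T.card := by
  simpa [bernoulliCyl] using h.2 T fun _ => false

lemma closeOn_eq_self {S : Finset (V d)} {ω : Config d}
    (hω : ∀ e ∈ edgesTouching S, ω e = false) : closeOn S ω = ω := by
  funext e
  by_cases he : ∃ y ∈ e.val, y ∈ S
  · simp [closeOn, he, hω e (mem_edgesTouching.mpr he)]
  · simp [closeOn, he]

lemma measurable_closeOn_edgeSigmaAlgebra_compl (S : Finset (V d)) :
    Measurable[edgeSigmaAlgebra (edgesTouching S : Set (Edge d))ᶜ] (closeOn S) := by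
  refine @measurable_pi_lambda _ _ _ (_) _ _ fun e => ?_
  by_cases he : ∃ y ∈ e.val, y ∈ S
  · simp [closeOn, he]
  · simp only [closeOn, Finset.mem_coe, he, if_false]
    exact measurable_eval_edgeSigmaAlgebra (mt mem_edgesTouching.mp he)

lemma IsBernoulli.measure_closeOn_preimage_inter (h : IsBernoulli d p μ) (S : Finset (V d))
    {A : Set (Config d)} (hA : MeasurableSet A) :
    μ (closeOn S ⁻¹' A ∩ {ω | ∀ e ∈ edgesTouching S, ω e = false}) =
      μ (closeOn S ⁻¹' A) * ENNReal.ofReal (1 - p) ^ (edgesTouching S).card := by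
  rw [← h.measure_forall_closed]
  exact (Indep_iff _ _ μ).mp (h.indep_edgeSigmaAlgebra disjoint_compl_left) _ _
    (measurable_closeOn_edgeSigmaAlgebra_compl S hA) (measurableSet_forall_closed _)

lemma IsBernoulli.measure_closeOn_preimage_le (h : IsBernoulli d p μ) (hp : p ∈ Ico 0 1)
    {S : Finset (V d)} {M : ℕ} (hS : S.card ≤ M) {A : Set (Config d)} (hA : MeasurableSet A) :
    μ (closeOn S ⁻¹' A) ≤ ENNReal.ofReal ((1 - p) ^ (-(2 * (d : ℤ) * (M : ℤ)))) * μ A := by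
  have hq : 0 < 1 - p := sub_pos.mpr hp.2
  have hconst : ENNReal.ofReal ((1 - p) ^ (-(2 * (d : ℤ) * (M : ℤ)))) =
      (ENNReal.ofReal (1 - p) ^ (2 * d * M))⁻¹ := by
    rw [zpow_neg, ENNReal.ofReal_inv_of_pos (by positivity), ← ENNReal.ofReal_pow hq.le]
    norm_cast
  rw [hconst, ← ENNReal.mul_le_iff_le_inv
    (pow_ne_zero _ (ENNReal.ofReal_pos.mpr hq).ne') (ENNReal.pow_ne_top ENNReal.ofReal_ne_top)]
  calc ENNReal.ofReal (1 - p) ^ (2 * d * M) * μ (closeOn S ⁻¹' A)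
      ≤ ENNReal.ofReal (1 - p) ^ (edgesTouching S).card * μ (closeOn S ⁻¹' A) := by
        gcongr ?_ * _
        exact pow_le_pow_of_le_one zero_le (ENNReal.ofReal_le_one.mpr (by linarith [hp.1]))
          ((card_edgesTouching_le S).trans (Nat.mul_le_mul_left _ hS))
    _ = μ (closeOn S ⁻¹' A ∩ {ω | ∀ e ∈ edgesTouching S, ω e = false}) := by
        rw [h.measure_closeOn_preimage_inter S hA, mul_comm]
    _ ≤ μ A := measure_mono fun ω hω => by
        simpa only [mem_preimage, closeOn_eq_self hω.2] using hω.1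

lemma IsBernoulli.measure_exists_closeOn_mem_le (h : IsBernoulli d p μ) (hp : p ∈ Ico 0 1)
    (B : Finset (V d)) (M : ℕ) {A : Set (Config d)} (hA : MeasurableSet A) :
    μ {ω | ∃ S ⊆ B, S.card ≤ M ∧ closeOn S ω ∈ A} ≤
      ENNReal.ofReal ((1 - p) ^ (-(2 * (d : ℤ) * (M : ℤ))) * ((B.card : ℝ) + 1) ^ M) * μ A := by
  set F : Finset (Finset (V d)) := {S ∈ B.powerset | S.card ≤ M} with hF
  set c := ENNReal.ofReal ((1 - p) ^ (-(2 * (d : ℤ) * (M : ℤ)))) with hc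
  have hunion : {ω : Config d | ∃ S ⊆ B, S.card ≤ M ∧ closeOn S ω ∈ A} =
      ⋃ S ∈ F, closeOn S ⁻¹' A := by
    ext ω
    simp [hF, and_assoc]
  have hF_card : (F.card : ENNReal) ≤ ENNReal.ofReal (((B.card : ℝ) + 1) ^ M) := by
    rw [← ENNReal.ofReal_natCast]
    exact ENNReal.ofReal_le_ofReal (mod_cast card_powerset_filter_card_le_le B M)
  calc μ {ω | ∃ S ⊆ B, S.card ≤ M ∧ closeOn S ω ∈ A}
      ≤ ∑ S ∈ F, μ (closeOn S ⁻¹' A) := hunion ▸ measure_biUnion_finset_le _ _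
    _ ≤ F.card • (c * μ A) := Finset.sum_le_card_nsmul _ _ _ fun S hS =>
        h.measure_closeOn_preimage_le hp (Finset.mem_filter.mp hS).2 hA
    _ ≤ ENNReal.ofReal (((B.card : ℝ) + 1) ^ M) * (c * μ A) := by
        rw [nsmul_eq_mul]
        gcongr
    _ = ENNReal.ofReal
          ((1 - p) ^ (-(2 * (d : ℤ) * (M : ℤ))) * ((B.card : ℝ) + 1) ^ M) * μ A := by
        rw [ENNReal.ofReal_mul' (by positivity), ← hc]
        ring

/-! ### The events `ℰ` and `ℬ` -/

lemma finite_edges_within {R : Set (V d)} (hR : R.Finite) :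
    {e : Edge d | ∀ y ∈ e.val, y ∈ R}.Finite := by
  lift R to Finset (V d) using hR
  refine (R.sym2.finite_toSet.preimage Subtype.val_injective.injOn).subset fun e he => ?_
  exact Finset.mem_sym2_iff.mpr he

lemma dependsOn_restrictTo (R : Set (V d)) :
    DependsOn (restrictTo R) {e : Edge d | ∀ y ∈ e.val, y ∈ R} := by
  intro ω ω' hωω'
  funext e
  by_cases he : ∀ y ∈ e.val, y ∈ R
  · simp only [restrictTo, if_pos he, hωω' e he]
  · simp only [restrictTo, if_neg he]

lemma measurableSet_eventE (x : V d) (ℓ L : ℕ) : MeasurableSet (eventE x ℓ L) := by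
  have hfinite : (slab d ℓ ∩ box x (3 * L)).Finite :=
    (coe_boxFinset x (3 * L) ▸ Finset.finite_toSet _).inter_of_right _
  refine measurableSet_of_dependsOn (finite_edges_within hfinite) fun ω ω' hωω' => ?_
  simp only [eventE, mem_ofPred_eq, dependsOn_restrictTo _ hωω']

lemma compl_eventB (x : V d) (ℓ L M : ℕ) :
    (eventB x ℓ L M)ᶜ =
      {ω | ∃ S ⊆ boxFinset x (3 * L), S.card ≤ M ∧ closeOn S ω ∈ (eventE x ℓ L)ᶜ} := by
  ext ω
  simp only [eventB, mem_compl_iff, mem_ofPred_eq, not_forall, exists_prop, ← coe_boxFinset]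
  constructor
  · rintro ⟨S, hSB, hS, hSM, hSE⟩
    lift S to Finset (V d) using hS
    exact ⟨S, Finset.coe_subset.mp hSB, ncard_coe_finset S ▸ hSM, hSE⟩
  · rintro ⟨S, hSB, hSM, hSE⟩
    exact ⟨S, Finset.coe_subset.mpr hSB, S.finite_toSet, (ncard_coe_finset S).trans_le hSM, hSE⟩

theorem eventB_compl_le_general (h : IsBernoulli d p μ) (hp : p ∈ Ico 0 1) (ℓ L M : ℕ) (x : V d) :
    μ (eventB x ℓ L M)ᶜ ≤
      ENNReal.ofReal ((1 - p) ^ (-(2 * (d : ℤ) * (M : ℤ))) * (((6 * L + 1) ^ d + 1 : ℝ)) ^ M) *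
        μ (eventE x ℓ L)ᶜ := by
  have hcard : ((boxFinset x (3 * L)).card : ℝ) = (6 * L + 1) ^ d := by
    rw [card_boxFinset]
    push_cast
    ring
  rw [compl_eventB, ← hcard]
  exact h.measure_exists_closeOn_mem_le hp _ M (measurableSet_eventE x ℓ L).compl

end

/-- The union bound over the at most `((6L+1)^d + 1)^M` sets
`S ⊆ B_x(3L)` with `|S| ≤ M`, combined with the cost `(1-p)^{-2dM}` of closing the edges
touching `S`, bounds `ℙ_p(¬ℬ(x,ℓ,L,M))` in terms of `ℙ_p(¬ℰ(x,ℓ,L))`, at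
`p = p_c + ε`. -/
theorem eventB_compl_le (d : ℕ) (hd : 2 ≤ d)
    (P : ℝ → Measure (Config d)) (hP : ∀ p ∈ Icc (0 : ℝ) 1, IsBernoulli d p (P p))
    (ε : ℝ) (hε : 0 < ε) (hpc : pcOf d P + ε < 1)
    (ℓ L M : ℕ) (hℓ : 1 ≤ ℓ) (hL : 1 ≤ L) (hM : 1 ≤ M) (x : V d) :
    P (pcOf d P + ε) (eventB x ℓ L M)ᶜ ≤
      ENNReal.ofReal ((1 - (pcOf d P + ε)) ^ (-(2 * (d : ℤ) * (M : ℤ))) *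
          (((6 * L + 1) ^ d + 1 : ℝ)) ^ M) *
        P (pcOf d P + ε) (eventE x ℓ L)ᶜ := by
  have hpc_nonneg : 0 ≤ pcOf d P := Real.sInf_nonneg fun p hp => hp.1.1
  have hp : pcOf d P + ε ∈ Ico 0 1 := ⟨by linarith, hpc⟩
  exact eventB_compl_le_general (hP _ (Ico_subset_Icc_self hp)) hp ℓ L M x

end Perc
end

section
/- Let d ≥ 2, let ℓ ≥ 8 be an integer, and let ω be a configuration on ℤ^d. For u ∈ ℤ² (identified with {x ∈ ℤ^d : x_i = 0 for all i ≥ 3}), call the box B_{ℓu}(ℓ) good if the restriction of ω to edges with both endpoints in B_{ℓu}(ℓ) contains, for every coordinate direction, an open path joining the two opposite faces of B_{ℓu}(ℓ) in that direction, and moreover any two open clusters of this restriction of ℓ∞-diameter at least ℓ/4 belong to the same open cluster of the restriction. Then deterministically: if G ⊆ ℤ² is an infinite nearest-neighbour-connected set such that B_{ℓu}(ℓ) is good for every u ∈ G, then the restriction of ω to edges with both endpoints in ⋃_{u∈G} B_{ℓu}(ℓ) contains an infinite open cluster. -/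
open MeasureTheory Set

namespace Perc

/-- The set `C` has `ℓ∞`-diameter at least `ℓ/4`. -/
def DiamGEQuarter {d : ℕ} (C : Set (V d)) (ℓ : ℕ) : Prop :=
  ∃ a ∈ C, ∃ b ∈ C, ∃ i, (ℓ : ℤ) ≤ 4 * |a i - b i|

/-- The box `B_{ℓu}(ℓ)` around the rescaled image of `u ∈ ℤ²` in `ℤ^d` is good: its
restriction of `ω` has open crossings between all pairs of opposite faces, and all open
clusters of the restriction of `ℓ∞`-diameter at least `ℓ/4` belong to one open cluster. -/
def GoodBox {d : ℕ} (ω : Config d) (ℓ : ℕ) (u : ℤ × ℤ) : Prop :=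
  (∀ i : Fin d,
      ∃ a ∈ {y ∈ box (fun j => (ℓ : ℤ) * emb d u j) ℓ |
          y i - (ℓ : ℤ) * emb d u i = (ℓ : ℤ)},
        ∃ b ∈ {y ∈ box (fun j => (ℓ : ℤ) * emb d u j) ℓ |
            y i - (ℓ : ℤ) * emb d u i = -(ℓ : ℤ)},
          Connected (restrictTo (box (fun j => (ℓ : ℤ) * emb d u j) ℓ) ω) a b) ∧
    ∀ y z : V d,
      DiamGEQuarter (cluster (restrictTo (box (fun j => (ℓ : ℤ) * emb d u j) ℓ) ω) y) ℓ →
      DiamGEQuarter (cluster (restrictTo (box (fun j => (ℓ : ℤ) * emb d u j) ℓ) ω) z) ℓ →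
      Connected (restrictTo (box (fun j => (ℓ : ℤ) * emb d u j) ℓ) ω) y z

/-!
In a good box all vertices lying in open clusters of diameter at least `ℓ/4` are connected to one
another. If `u` and `v` are neighbours, a crossing of the box of `u` in the direction of `v - u`
ends at a hyperplane through the centre of the box of `v`, so its part after the last visit to
distance `ℓ` from that hyperplane stays in both boxes and has diameter at least `ℓ`. Hence the large
clusters of neighbouring good boxes meet, and chaining them along `G` puts one vertex of each box of
`G` into a single open cluster. This cluster is infinite, because each vertex lies in finitely many
boxes.
-/

section

variable {d : ℕ} {ω : Config d} {R R' : Set (V d)} {x x' y : V d}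

theorem OpenAdj.symm (h : OpenAdj ω x y) : OpenAdj ω y x := by
  unfold OpenAdj at h ⊢
  rwa [Sym2.eq_swap]

instance : Std.Symm (OpenAdj ω) := ⟨fun _ _ => OpenAdj.symm⟩

theorem Connected.symm (h : Connected ω x y) : Connected ω y x :=
  Relation.ReflTransGen.stdSymm.symm _ _ h

theorem Adjacent.abs_sub_le_one (h : Adjacent x y) (i : Fin d) : |x i - y i| ≤ 1 :=
  h ▸ Finset.single_le_sum (f := fun i => |x i - y i|) (fun _ _ => abs_nonneg _) (Finset.mem_univ i)

theorem OpenAdj.abs_sub_le_one (h : OpenAdj ω x y) (i : Fin d) : |x i - y i| ≤ 1 := by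
  obtain ⟨⟨a, b, hab, he⟩, -⟩ := h
  rcases Sym2.eq_iff.1 he with ⟨rfl, rfl⟩ | ⟨rfl, rfl⟩
  · exact hab.abs_sub_le_one i
  · exact (abs_sub_comm _ _).trans_le (hab.abs_sub_le_one i)

theorem openAdj_restrictTo_iff :
    OpenAdj (restrictTo R ω) x y ↔ OpenAdj ω x y ∧ x ∈ R ∧ y ∈ R := by
  by_cases hR : x ∈ R ∧ y ∈ R <;> simp [OpenAdj, restrictTo, hR]

theorem Connected.mono_restrictTo (hR : R ⊆ R') (h : Connected (restrictTo R ω) x y) :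
    Connected (restrictTo R' ω) x y :=
  Relation.ReflTransGen.mono (fun _ _ hab =>
    let ⟨hopen, ha, hb⟩ := openAdj_restrictTo_iff.1 hab
    openAdj_restrictTo_iff.2 ⟨hopen, hR ha, hR hb⟩) _ _ h

theorem cluster_restrictTo_of_notMem (hx : x ∉ R) : cluster (restrictTo R ω) x = {x} := by
  refine Subset.antisymm (fun y hxy => ?_) (singleton_subset_iff.2 .refl)
  rcases Relation.ReflTransGen.cases_head hxy with rfl | ⟨z, hxz, -⟩
  · rfl
  · exact absurd (openAdj_restrictTo_iff.1 hxz).2.1 hx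

theorem connected_restrictTo_biUnion {ι : Type*} {G : Set ι} {B C : ι → Set (V d)} {u v : ι}
    (hC : ∀ i ∈ G, ∀ y ∈ C i, ∀ z ∈ C i, Connected (restrictTo (B i) ω) y z)
    (huv : Relation.ReflTransGen (fun i j => j ∈ G ∧ (C i ∩ C j).Nonempty) u v)
    (hu : u ∈ G) (hx : x ∈ C u) (hy : y ∈ C v) :
    Connected (restrictTo (⋃ i ∈ G, B i) ω) x y := by
  have within {i : ι} (hi : i ∈ G) {y z : V d} (hy : y ∈ C i) (hz : z ∈ C i) :
      Connected (restrictTo (⋃ i ∈ G, B i) ω) y z :=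
    (hC i hi y hy z hz).mono_restrictTo (subset_biUnion_of_mem hi)
  induction huv generalizing y with
  | refl => exact within hu hx hy
  | tail _ hij ih =>
    obtain ⟨hj, w, hwi, hwj⟩ := hij
    exact (ih hwi).trans (within hj hwj hy)

theorem hasInfCluster_restrictTo_biUnion {ι : Type*} {G : Set ι} {B C : ι → Set (V d)}
    (hG : G.Infinite)
    (hchain : ∀ u ∈ G, ∀ v ∈ G,
      Relation.ReflTransGen (fun i j => j ∈ G ∧ (C i ∩ C j).Nonempty) u v)
    (hC : ∀ i ∈ G, ∀ y ∈ C i, ∀ z ∈ C i, Connected (restrictTo (B i) ω) y z)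
    (hfin : ∀ y, {i ∈ G | y ∈ C i}.Finite) :
    HasInfCluster (restrictTo (⋃ i ∈ G, B i) ω) := by
  have nonempty : ∀ u ∈ G, (C u).Nonempty := fun u hu => by
    obtain ⟨v, hv, hvu⟩ := hG.nontrivial.exists_ne u
    obtain rfl | ⟨w, ⟨-, huw⟩, -⟩ := (hchain u hu v hv).cases_head
    · exact absurd rfl hvu
    · exact huw.left
  obtain ⟨u, hu⟩ := hG.nonempty
  obtain ⟨x, hx⟩ := nonempty u hu
  refine ⟨x, fun hfinite => hG ((hfinite.biUnion fun y _ => hfin y).subset fun v hv => ?_)⟩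
  obtain ⟨y, hy⟩ := nonempty v hv
  exact mem_biUnion (connected_restrictTo_biUnion hC (hchain u hu v hv) hu hx hy) ⟨hv, hy⟩

theorem exists_reflTransGen_sublevel {α : Type*} {r : α → α → Prop} {f : α → ℤ} {c : ℤ} {p q : α}
    (hf : ∀ a b, r a b → f a ≤ f b + 1) (hpq : Relation.ReflTransGen r p q)
    (hp : c ≤ f p) (hq : f q ≤ c) :
    ∃ z, f z = c ∧ Relation.ReflTransGen (fun a b => r a b ∧ f a ≤ c ∧ f b ≤ c) z q := by
  induction hpq with
  | refl => exact ⟨p, le_antisymm hq hp, .refl⟩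
  | @tail b q _ hbq ih =>
    rcases le_or_gt (f b) c with hb | hb
    · obtain ⟨z, hz, hzb⟩ := ih hb
      exact ⟨z, hz, hzb.tail ⟨hbq, hb, hq⟩⟩
    · exact ⟨q, by linarith [hf b q hbq, Int.add_one_le_of_lt hb], .refl⟩

theorem mem_box_comm {L : ℕ} : y ∈ box x L ↔ x ∈ box y L :=
  forall_congr' fun i => by rw [abs_sub_comm]

theorem finite_box (x : V d) (L : ℕ) : (box x L).Finite :=
  (finite_Icc (fun i => x i - L) (fun i => x i + L)).subset fun _ hy =>
    ⟨fun i => by linarith [(abs_le.1 (hy i)).1], fun i => by linarith [(abs_le.1 (hy i)).2]⟩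

theorem exists_connected_restrictTo_box_inter_box {L : ℕ} {i : Fin d} {p q : V d}
    (hx : ∀ j ≠ i, x' j = x j) (hpq : Connected (restrictTo (box x L) ω) p q)
    (hp : L ≤ |p i - x' i|) (hq : q i = x' i) :
    ∃ z, |z i - q i| = L ∧ Connected (restrictTo (box x L ∩ box x' L) ω) z q := by
  have lipschitz (a b : V d) (hab : OpenAdj (restrictTo (box x L) ω) a b) :
      |a i - x' i| ≤ |b i - x' i| + 1 := by
    linarith [abs_sub_le (a i) (b i) (x' i), hab.abs_sub_le_one i]
  have mem_box {a : V d} (ha : a ∈ box x L) (hai : |a i - x' i| ≤ L) : a ∈ box x' L := fun j => by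
    obtain rfl | hj := eq_or_ne j i
    · exact hai
    · exact hx j hj ▸ ha j
  obtain ⟨z, hz, hzq⟩ := exists_reflTransGen_sublevel lipschitz hpq hp (by simp [hq])
  refine ⟨z, hq ▸ hz, Relation.ReflTransGen.mono (fun a b ⟨hab, ha, hb⟩ => ?_) _ _ hzq⟩
  obtain ⟨hopen, hax, hbx⟩ := openAdj_restrictTo_iff.1 hab
  exact openAdj_restrictTo_iff.2 ⟨hopen, ⟨hax, mem_box hax ha⟩, ⟨hbx, mem_box hbx hb⟩⟩

theorem emb_injective (hd : 2 ≤ d) : Function.Injective (emb d) := fun u v huv =>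
  Prod.ext (by simpa [emb] using congr_fun huv ⟨0, by lia⟩)
    (by simpa [emb] using congr_fun huv ⟨1, by lia⟩)

theorem Adjacent₂.exists_abs_emb_sub_eq_one (hd : 2 ≤ d) {u v : ℤ × ℤ} (h : Adjacent₂ u v) :
    ∃ i : Fin d, |emb d v i - emb d u i| = 1 ∧ ∀ j ≠ i, emb d v j = emb d u j := by
  rw [Adjacent₂, abs_sub_comm u.1, abs_sub_comm u.2] at h
  obtain h₁ | h₁ := eq_or_ne v.1 u.1
  · refine ⟨⟨1, by lia⟩, by simpa [emb, h₁] using h, fun j hj => ?_⟩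
    have hj : (j : ℕ) ≠ 1 := fun hj1 => hj (Fin.ext hj1)
    simp [emb, h₁, hj]
  · have h₂ : v.2 = u.2 := by
      rw [← sub_eq_zero, ← abs_nonpos_iff]
      linarith [Int.one_le_abs (sub_ne_zero.2 h₁)]
    refine ⟨⟨0, by lia⟩, by simpa [emb, h₂] using h, fun j hj => ?_⟩
    have hj : (j : ℕ) ≠ 0 := fun hj0 => hj (Fin.ext hj0)
    simp [emb, h₂, hj]

/-- The box `B_{ℓu}(ℓ)` of the renormalized lattice site `u ∈ ℤ²`. -/
abbrev block (d ℓ : ℕ) (u : ℤ × ℤ) : Set (V d) := box (fun j => (ℓ : ℤ) * emb d u j) ℓ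

/-- The vertices whose open cluster in the box `B_{ℓu}(ℓ)` has diameter at least `ℓ/4`. If the
box is good, they form a single open cluster of the box. -/
def largeCluster (ω : Config d) (ℓ : ℕ) (u : ℤ × ℤ) : Set (V d) :=
  {z | DiamGEQuarter (cluster (restrictTo (block d ℓ u) ω) z) ℓ}

theorem finite_setOf_mem_block (hd : 2 ≤ d) {ℓ : ℕ} (hℓ : 0 < ℓ) (y : V d) :
    {u | y ∈ block d ℓ u}.Finite := by
  have center_injective : Function.Injective fun (u : ℤ × ℤ) (j : Fin d) => (ℓ : ℤ) * emb d u j :=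
    fun u v huv => emb_injective hd <| funext fun j =>
      mul_left_cancel₀ (Nat.cast_ne_zero.2 hℓ.ne') (congr_fun huv j)
  exact ((finite_box y ℓ).preimage center_injective.injOn).subset fun _ hu => mem_box_comm.1 hu

theorem largeCluster_subset_block {ℓ : ℕ} (hℓ : 0 < ℓ) {u : ℤ × ℤ} :
    largeCluster ω ℓ u ⊆ block d ℓ u := fun z hz => by
  by_contra hmem
  obtain ⟨a, ha, b, hb, i, hab⟩ := hz
  rw [cluster_restrictTo_of_notMem hmem, mem_singleton_iff] at ha hb
  subst ha hb
  exact hℓ.not_ge (by simpa using hab)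

theorem mem_largeCluster {ℓ : ℕ} {u : ℤ × ℤ} {z q : V d} {i : Fin d}
    (hzq : Connected (restrictTo (block d ℓ u) ω) z q) (hi : ℓ ≤ 4 * |z i - q i|) :
    z ∈ largeCluster ω ℓ u :=
  ⟨z, .refl, q, hzq, i, hi⟩

theorem GoodBox.exists_connected_of_face {ℓ : ℕ} {u : ℤ × ℤ} (hu : GoodBox ω ℓ u) {i : Fin d}
    {c : ℤ} (hc : |c - ℓ * emb d u i| = ℓ) :
    ∃ p q, Connected (restrictTo (block d ℓ u) ω) p q ∧ |p i - c| = 2 * ℓ ∧ q i = c := by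
  obtain ⟨a, ⟨-, ha⟩, b, ⟨-, hb⟩, hab⟩ := hu.1 i
  rcases eq_or_eq_neg_of_abs_eq hc with hc | hc
  · exact ⟨b, a, hab.symm, (abs_eq (by positivity)).2 (.inr (by lia)), by lia⟩
  · exact ⟨a, b, hab, (abs_eq (by positivity)).2 (.inl (by lia)), by lia⟩

theorem GoodBox.largeCluster_inter_nonempty (hd : 2 ≤ d) {ℓ : ℕ} {u v : ℤ × ℤ}
    (hu : GoodBox ω ℓ u) (huv : Adjacent₂ u v) :
    (largeCluster ω ℓ u ∩ largeCluster ω ℓ v).Nonempty := by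
  obtain ⟨i, hi, hne⟩ := huv.exists_abs_emb_sub_eq_one hd
  have hface : |(ℓ : ℤ) * emb d v i - ℓ * emb d u i| = ℓ := by
    rw [← mul_sub, abs_mul, hi, mul_one, Nat.abs_cast]
  obtain ⟨p, q, hpq, hp, hq⟩ := hu.exists_connected_of_face hface
  obtain ⟨z, hz, hzq⟩ := exists_connected_restrictTo_box_inter_box
    (x' := fun j => (ℓ : ℤ) * emb d v j) (fun j hj => by rw [hne j hj]) hpq (by lia) hq
  have hdiam : (ℓ : ℤ) ≤ 4 * |z i - q i| := by lia
  exact ⟨z, mem_largeCluster (hzq.mono_restrictTo inter_subset_left) hdiam,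
    mem_largeCluster (hzq.mono_restrictTo inter_subset_right) hdiam⟩

end

theorem good_boxes_percolate_general (d ℓ : ℕ) (hd : 2 ≤ d) (hℓ : 0 < ℓ) (ω : Config d)
    (G : Set (ℤ × ℤ)) (hGinf : G.Infinite) (hGconn : ConnSet₂ G)
    (hgood : ∀ u ∈ G, GoodBox ω ℓ u) :
    HasInfCluster (restrictTo (⋃ u ∈ G, block d ℓ u) ω) := by
  refine hasInfCluster_restrictTo_biUnion (C := largeCluster ω ℓ) hGinf ?_ ?_ ?_
  · exact fun u hu v hv => Relation.ReflTransGen.mono (fun a b ⟨ha, hb, hab⟩ =>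
      ⟨hb, (hgood a ha).largeCluster_inter_nonempty hd hab⟩) _ _ (hGconn u hu v hv)
  · exact fun u hu y hy z hz => (hgood u hu).2 y z hy hz
  · exact fun y => (finite_setOf_mem_block hd hℓ y).subset fun u hu =>
      largeCluster_subset_block hℓ hu.2

/-- Deterministically, if `G ⊆ ℤ²` is an infinite
nearest-neighbour-connected set all of whose boxes `B_{ℓu}(ℓ)`, `u ∈ G`, are good, then
the restriction of `ω` to the union of these boxes has an infinite open cluster. -/
theorem good_boxes_percolate (d ℓ : ℕ) (hd : 2 ≤ d) (hℓ : 8 ≤ ℓ) (ω : Config d)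
    (G : Set (ℤ × ℤ)) (hGinf : G.Infinite) (hGconn : ConnSet₂ G)
    (hgood : ∀ u ∈ G, GoodBox ω ℓ u) :
    HasInfCluster
      (restrictTo (⋃ u ∈ G, box (fun j => (ℓ : ℤ) * emb d u j) ℓ) ω) :=
  good_boxes_percolate_general d ℓ hd (by lia) ω G hGinf hGconn hgood

end Perc
end
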